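/- Let ν > 0 and B̂(u) = (u·∇)u + (1/2)(Div u)u. Then for any u, v in H¹₀(𝒪; ℝ²), |⟨B̂(u) − B̂(v), u − v⟩| ≤ (ν/2) ‖u − v‖² + (27/(2ν³)) |u − v|² ‖v‖_{L⁴(𝒪;ℝ²)}⁴, where ‖·‖ is the H¹₀-norm and |·| the L²-norm. -/

import Mathlib

/-!
Write `w = u - v`. Since `B̂(a, b)` is bilinear, `B̂(u) - B̂(v) = B̂(u, w) + B̂(w, v)`, and pointwise
`B̂(u, w) · w = ½ div (u |w|²)` and `B̂(w, v) · w + B̂(w, w) · v = div (w (v · w))`. The divergence of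
a compactly supported field integrates to zero, so `⟨B̂(u) - B̂(v), w⟩ = -⟨B̂(w, w), v⟩`
(`pairing_identity`, `integral_pd_eq_zero`).

The integrand is the contraction of `∇w` with `w ⊗ v + ½ (w · v) I`, whose square is at most
`(5/2) |w|² |v|²`; hence `(B̂(w, w) · v)² ≤ (5/2) |∇w|² |w|² |v|²` (`trilinear_sq_le`). Two uses of
the Cauchy-Schwarz inequality and Ladyzhenskaya's inequality
`∫ |w|⁴ ≤ 2 (∫ |w|²) (∫ |∇w|²)` (`ladyzhenskaya`) give
`⟨B̂(w, w), v⟩⁴ ≤ (25/2) (‖w‖²)³ (|w|² ‖v‖⁴_{L⁴})`. Young's inequality with exponents `4/3` and `4`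
would absorb any constant up to `16`, so `25/2` is enough (`young_fourth`).
-/

/- STATEMENT 9: for ν > 0 and u, v ∈ H¹₀(𝒪;ℝ²),
   |⟨B̂(u) − B̂(v), u − v⟩| ≤ (ν/2)‖u−v‖² + (27/(2ν³)) |u−v|² ‖v‖⁴_{L⁴(𝒪;ℝ²)}. -/

noncomputable section

open MeasureTheory Real

/-- Vector fields on `ℝ²` with two components. -/
abbrev Vec := Fin 2 → ℝ × ℝ → ℝ

/-- The two coordinate directions of `ℝ²`. -/
def bdir : Fin 2 → ℝ × ℝ := ![(1, 0), (0, 1)]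

/-- `i`-th partial derivative. -/
def pd (i : Fin 2) (f : ℝ × ℝ → ℝ) (x : ℝ × ℝ) : ℝ :=
  fderiv ℝ f x (bdir i)

/-- Divergence of a vector field. -/
def divg (u : Vec) (x : ℝ × ℝ) : ℝ := ∑ i, pd i (u i) x

/-- Smooth compactly supported fields with support inside `O`:
a surrogate for membership in `H¹₀(O; ℝ²)`. -/
def H10 (O : Set (ℝ × ℝ)) (u : Vec) : Prop :=
  ∀ i, ContDiff ℝ (⊤ : ℕ∞) (u i) ∧ HasCompactSupport (u i) ∧ tsupport (u i) ⊆ O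

/-- `L²(O)` pairing of vector fields. -/
def vInner (O : Set (ℝ × ℝ)) (u v : Vec) : ℝ := ∫ x in O, ∑ j, u j x * v j x

/-- `L²(O)` pairing of scalar functions. -/
def sInner (O : Set (ℝ × ℝ)) (p q : ℝ × ℝ → ℝ) : ℝ := ∫ x in O, p x * q x

/-- `L²(O)` norm of a vector field. -/
def l2 (O : Set (ℝ × ℝ)) (u : Vec) : ℝ := Real.sqrt (∫ x in O, ∑ j, (u j x) ^ 2)

/-- `L²(O)` norm of a scalar function. -/
def sl2 (O : Set (ℝ × ℝ)) (p : ℝ × ℝ → ℝ) : ℝ := Real.sqrt (∫ x in O, (p x) ^ 2)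

/-- `H¹₀(O)` (gradient) norm of a vector field. -/
def h1 (O : Set (ℝ × ℝ)) (u : Vec) : ℝ :=
  Real.sqrt (∫ x in O, ∑ i, ∑ j, (pd i (u j) x) ^ 2)

/-- `L⁴(O)` norm of a vector field. -/
def l4 (O : Set (ℝ × ℝ)) (u : Vec) : ℝ :=
  (∫ x in O, (∑ j, (u j x) ^ 2) ^ 2) ^ ((1 : ℝ) / 4)

/-- Convection term `(u·∇)v`. -/
def conv (u v : Vec) : Vec := fun j x => ∑ i, u i x * pd i (v j) x

/-- The modified nonlinearity `B̂(u,v) = (u·∇)v + ½(divg u) v`. -/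
def Bhat2 (u v : Vec) : Vec := fun j x => conv u v j x + (1 / 2) * divg u x * v j x

/-- `B̂(u) = (u·∇)u + ½(divg u) u`. -/
def Bhat (u : Vec) : Vec := Bhat2 u u

/-- Dirichlet pairing `⟨-Δu, w⟩ = Σ_{i,j} ∫_O ∂_i u_j ∂_i w_j`. -/
def aPair (O : Set (ℝ × ℝ)) (u w : Vec) : ℝ :=
  ∫ x in O, ∑ i, ∑ j, pd i (u j) x * pd i (w j) x

/-! ### Calculus for `pd` and integrability of test functions -/

/-- Continuous with compact support: the class in which all integrability questions are settled. -/
def CC (f : ℝ × ℝ → ℝ) : Prop := Continuous f ∧ HasCompactSupport f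

/-- Smooth with compact support in the whole plane. -/
def TestFn (f : ℝ × ℝ → ℝ) : Prop := ContDiff ℝ (⊤ : ℕ∞) f ∧ HasCompactSupport f

theorem CC.integrable {f : ℝ × ℝ → ℝ} (hf : CC f) : Integrable f :=
  hf.1.integrable_of_hasCompactSupport hf.2

theorem CC.add {f g : ℝ × ℝ → ℝ} (hf : CC f) (hg : CC g) : CC (fun x => f x + g x) :=
  ⟨hf.1.add hg.1, hf.2.add hg.2⟩

theorem CC.mul {f g : ℝ × ℝ → ℝ} (hf : CC f) (hg : CC g) : CC (fun x => f x * g x) :=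
  ⟨hf.1.mul hg.1, hf.2.mul_right⟩

theorem CC.const_mul {f : ℝ × ℝ → ℝ} (c : ℝ) (hf : CC f) : CC (fun x => c * f x) :=
  ⟨hf.1.const_mul c, HasCompactSupport.mul_left (f := fun _ => c) hf.2⟩

theorem CC.sq {f : ℝ × ℝ → ℝ} (hf : CC f) : CC (fun x => f x ^ 2) := by
  simpa only [pow_two] using hf.mul hf

theorem CC.abs {f : ℝ × ℝ → ℝ} (hf : CC f) : CC (fun x => |f x|) :=
  ⟨hf.1.abs, hf.2.comp_left (g := fun t : ℝ => |t|) abs_zero⟩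

theorem TestFn.cc {f : ℝ × ℝ → ℝ} (hf : TestFn f) : CC f := ⟨hf.1.continuous, hf.2⟩

theorem TestFn.differentiable {f : ℝ × ℝ → ℝ} (hf : TestFn f) : Differentiable ℝ f :=
  hf.1.differentiable (by simp)

theorem TestFn.add {f g : ℝ × ℝ → ℝ} (hf : TestFn f) (hg : TestFn g) :
    TestFn (fun x => f x + g x) :=
  ⟨hf.1.add hg.1, hf.2.add hg.2⟩

theorem TestFn.sub {f g : ℝ × ℝ → ℝ} (hf : TestFn f) (hg : TestFn g) :
    TestFn (fun x => f x - g x) :=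
  ⟨hf.1.sub hg.1, hf.2.sub hg.2⟩

theorem TestFn.mul {f g : ℝ × ℝ → ℝ} (hf : TestFn f) (hg : TestFn g) :
    TestFn (fun x => f x * g x) :=
  ⟨hf.1.mul hg.1, hf.2.mul_right⟩

theorem TestFn.const_mul {f : ℝ × ℝ → ℝ} (c : ℝ) (hf : TestFn f) : TestFn (fun x => c * f x) :=
  ⟨contDiff_const.mul hf.1, HasCompactSupport.mul_left (f := fun _ => c) hf.2⟩

theorem TestFn.pd {f : ℝ × ℝ → ℝ} (i : Fin 2) (hf : TestFn f) : CC (pd i f) :=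
  ⟨(hf.1.continuous_fderiv (by simp)).clm_apply continuous_const, hf.2.fderiv_apply (𝕜 := ℝ) _⟩

theorem pd_sub (i : Fin 2) {f g : ℝ × ℝ → ℝ} (hf : Differentiable ℝ f) (hg : Differentiable ℝ g)
    (x : ℝ × ℝ) : pd i (fun y => f y - g y) x = pd i f x - pd i g x := by
  have h := ((hf x).hasFDerivAt.sub (hg x).hasFDerivAt).fderiv
  change fderiv ℝ (f - g) x _ = _
  rw [h]; rfl

theorem pd_eq_zero (i : Fin 2) {f : ℝ × ℝ → ℝ} {x : ℝ × ℝ} (hx : x ∉ tsupport f) :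
    pd i f x = 0 := by
  have h : fderiv ℝ f x = 0 := by
    by_contra h
    exact hx (support_fderiv_subset ℝ h)
  simp [pd, h]

theorem integral_pd_eq_zero (i : Fin 2) {f : ℝ × ℝ → ℝ} (hf : TestFn f) :
    ∫ x, pd i f x = 0 := by
  have hi : Integrable (fun x => fderiv ℝ f x (bdir i)) (volume : Measure (ℝ × ℝ)) :=
    (hf.pd i).integrable
  have h := integral_mul_fderiv_eq_neg_fderiv_mul_of_integrable (𝕜 := ℝ)
    (μ := (volume : Measure (ℝ × ℝ))) (f := fun _ => (1 : ℝ)) (g := f) (v := bdir i)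
    (by simp) (by simpa using hi) (by simpa using hf.cc.integrable)
    (fun x _ => by fun_prop) (fun x _ => hf.differentiable x)
  simpa [pd] using h

theorem pd_sq_add_sq (i : Fin 2) {f g : ℝ × ℝ → ℝ} (hf : Differentiable ℝ f)
    (hg : Differentiable ℝ g) (x : ℝ × ℝ) :
    pd i (fun y => f y * f y + g y * g y) x = 2 * (f x * pd i f x + g x * pd i g x) := by
  have h := (((hf x).hasFDerivAt.mul (hf x).hasFDerivAt).add
    ((hg x).hasFDerivAt.mul (hg x).hasFDerivAt)).fderiv
  change fderiv ℝ (f * f + g * g) x _ = _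
  rw [h]
  simp [pd]
  ring

/-- Derivative of a component of the flux `½ u |w|² + w (v · w)`. -/
theorem pd_flux (i : Fin 2) {a b p q r s : ℝ × ℝ → ℝ} (ha : Differentiable ℝ a)
    (hb : Differentiable ℝ b) (hp : Differentiable ℝ p) (hq : Differentiable ℝ q)
    (hr : Differentiable ℝ r) (hs : Differentiable ℝ s) (x : ℝ × ℝ) :
    pd i (fun y => 1 / 2 * (a y * (p y * p y + q y * q y)) + b y * (r y * p y + s y * q y)) x
      = 1 / 2 * (pd i a x * (p x * p x + q x * q x))
        + a x * (p x * pd i p x + q x * pd i q x)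
        + pd i b x * (r x * p x + s x * q x)
        + b x * (pd i r x * p x + r x * pd i p x + pd i s x * q x + s x * pd i q x) := by
  have a' := (ha x).hasFDerivAt
  have b' := (hb x).hasFDerivAt
  have p' := (hp x).hasFDerivAt
  have q' := (hq x).hasFDerivAt
  have r' := (hr x).hasFDerivAt
  have s' := (hs x).hasFDerivAt
  have h := (((a'.mul ((p'.mul p').add (q'.mul q'))).const_mul (1 / 2)).add
    (b'.mul ((r'.mul p').add (s'.mul q')))).fderiv
  have e : pd i (fun y => 1 / 2 * (a y * (p y * p y + q y * q y))
      + b y * (r y * p y + s y * q y)) x = _ := congrArg (fun L => L (bdir i)) h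
  rw [e]
  simp [pd]
  ring

/-! ### Ladyzhenskaya's inequality -/

/-- Cauchy-Schwarz, in a form that needs no square roots of the integrands. -/
theorem integral_sq_le {φ p q : ℝ × ℝ → ℝ} (hφ : CC φ) (hp : CC p) (hq : CC q)
    (p0 : ∀ x, 0 ≤ p x) (q0 : ∀ x, 0 ≤ q x) (h : ∀ x, φ x ^ 2 ≤ p x * q x) :
    (∫ x, φ x) ^ 2 ≤ (∫ x, p x) * ∫ x, q x := by
  -- The quadratic `p t² + 2 φ t + q` is nonnegative at every point, hence so is its integral.
  have key : ∀ t : ℝ, 0 ≤ (∫ x, p x) * (t * t) + (2 * ∫ x, φ x) * t + ∫ x, q x := by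
    intro t
    have e : (∫ x, p x) * (t * t) + (2 * ∫ x, φ x) * t + ∫ x, q x
        = ∫ x, (t * t) * p x + (2 * t) * φ x + q x := by
      rw [integral_add (((hp.const_mul _).add (hφ.const_mul _)).integrable) hq.integrable,
        integral_add (hp.const_mul _).integrable (hφ.const_mul _).integrable,
        integral_const_mul, integral_const_mul]
      ring
    rw [e]
    refine integral_nonneg fun x => ?_
    have h1 := h x
    rcases (p0 x).eq_or_lt with h0 | h0
    · have hφ0 : φ x = 0 := by
        rw [← h0, zero_mul] at h1
        exact pow_eq_zero_iff two_ne_zero |>.1 (le_antisymm h1 (sq_nonneg _))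
      simpa [← h0, hφ0] using q0 x
    · have h2 : 0 ≤ p x * ((t * t) * p x + (2 * t) * φ x + q x) := by
        nlinarith [sq_nonneg (p x * t + φ x)]
      exact nonneg_of_mul_nonneg_right h2 h0
  have := discrim_le_zero key
  rw [discrim] at this
  nlinarith

theorem abs_le_integral_deriv {g : ℝ → ℝ} (hg : ContDiff ℝ 1 g) (hc : HasCompactSupport g)
    (b : ℝ) : |g b| ≤ ∫ t, |deriv g t| := by
  have hi : Integrable (deriv g) :=
    (hg.continuous_deriv le_rfl).integrable_of_hasCompactSupport hc.deriv
  rw [← hc.integral_Iic_deriv_eq hg b]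
  refine (abs_integral_le_integral_abs).trans ?_
  exact setIntegral_le_integral hi.abs (Filter.Eventually.of_forall fun t => abs_nonneg _)

theorem abs_le_integral_pd_zero {f : ℝ × ℝ → ℝ} (hf : TestFn f) (x y : ℝ) :
    |f (x, y)| ≤ ∫ s, |pd 0 f (s, y)| := by
  have hd : ∀ s, deriv (fun s => f (s, y)) s = pd 0 f (s, y) := fun s => by
    have h := (hf.differentiable (s, y)).hasFDerivAt.comp_hasDerivAt s
      ((hasDerivAt_id s).prodMk (hasDerivAt_const s y))
    exact h.deriv.trans (by simp [pd, bdir])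
  have hc : HasCompactSupport (fun s => f (s, y)) :=
    HasCompactSupport.intro (hf.2.isCompact.image continuous_fst) fun s hs =>
      image_eq_zero_of_notMem_tsupport fun h => hs ⟨_, h, rfl⟩
  have := abs_le_integral_deriv (g := fun s => f (s, y))
    ((hf.1.of_le (by exact_mod_cast le_top)).comp (contDiff_id.prodMk contDiff_const)) hc x
  simpa only [hd] using this

theorem abs_le_integral_pd_one {f : ℝ × ℝ → ℝ} (hf : TestFn f) (x y : ℝ) :
    |f (x, y)| ≤ ∫ s, |pd 1 f (x, s)| := by
  have hd : ∀ s, deriv (fun s => f (x, s)) s = pd 1 f (x, s) := fun s => by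
    have h := (hf.differentiable (x, s)).hasFDerivAt.comp_hasDerivAt s
      ((hasDerivAt_const s x).prodMk (hasDerivAt_id s))
    exact h.deriv.trans (by simp [pd, bdir])
  have hc : HasCompactSupport (fun s => f (x, s)) :=
    HasCompactSupport.intro (hf.2.isCompact.image continuous_snd) fun s hs =>
      image_eq_zero_of_notMem_tsupport fun h => hs ⟨_, h, rfl⟩
  have := abs_le_integral_deriv (g := fun s => f (x, s))
    ((hf.1.of_le (by exact_mod_cast le_top)).comp (contDiff_const.prodMk contDiff_id)) hc y
  simpa only [hd] using this

/-- The planar Gagliardo-Nirenberg inequality with the two partial derivatives kept separate: this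
is what yields the constant `2` in `ladyzhenskaya`. -/
theorem integral_sq_le_pd_mul_pd {f : ℝ × ℝ → ℝ} (hf : TestFn f) :
    ∫ x, f x ^ 2 ≤ (∫ x, |pd 0 f x|) * ∫ x, |pd 1 f x| := by
  have h0 : Integrable (fun z => |pd 0 f z|) ((volume : Measure ℝ).prod volume) :=
    (hf.pd 0).abs.integrable
  have h1 : Integrable (fun z => |pd 1 f z|) ((volume : Measure ℝ).prod volume) :=
    (hf.pd 1).abs.integrable
  have e0 : ∫ z, |pd 0 f z| = ∫ y, ∫ s, |pd 0 f (s, y)| := integral_prod_symm _ h0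
  have e1 : ∫ z, |pd 1 f z| = ∫ x, ∫ s, |pd 1 f (x, s)| := integral_prod _ h1
  have i0 : Integrable fun y : ℝ => ∫ s, |pd 0 f (s, y)| := h0.integral_prod_right
  have i1 : Integrable fun x : ℝ => ∫ s, |pd 1 f (x, s)| := h1.integral_prod_left
  rw [e0, e1, mul_comm, ← integral_prod_mul]
  refine integral_mono hf.cc.sq.integrable (i1.mul_prod i0) fun z => ?_
  have a := abs_le_integral_pd_zero hf z.1 z.2
  have b := abs_le_integral_pd_one hf z.1 z.2
  calc f z ^ 2 = |f z| * |f z| := by rw [← sq_abs, pow_two]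
    _ ≤ _ := mul_le_mul b a (abs_nonneg _) ((abs_nonneg _).trans b)

/-- `|w|²` for the field with components `f`, `g`. -/
def nsq (f g : ℝ × ℝ → ℝ) (x : ℝ × ℝ) : ℝ := f x * f x + g x * g x

theorem nsq_nonneg (f g : ℝ × ℝ → ℝ) (x : ℝ × ℝ) : 0 ≤ nsq f g x :=
  add_nonneg (mul_self_nonneg _) (mul_self_nonneg _)

theorem CC.nsq {f g : ℝ × ℝ → ℝ} (hf : CC f) (hg : CC g) : CC (nsq f g) :=
  (hf.mul hf).add (hg.mul hg)

theorem TestFn.nsq {f g : ℝ × ℝ → ℝ} (hf : TestFn f) (hg : TestFn g) : TestFn (nsq f g) :=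
  (hf.mul hf).add (hg.mul hg)

theorem integral_abs_pd_nsq_sq_le (i : Fin 2) {f g : ℝ × ℝ → ℝ} (hf : TestFn f) (hg : TestFn g) :
    (∫ x, |pd i (nsq f g) x|) ^ 2 ≤ 4 * (∫ x, nsq f g x) * ∫ x, nsq (pd i f) (pd i g) x := by
  rw [← integral_const_mul 4 (nsq f g)]
  refine integral_sq_le ((hf.nsq hg).pd i).abs ((hf.nsq hg).cc.const_mul 4)
    ((hf.pd i).nsq (hg.pd i)) (fun x => mul_nonneg (by norm_num) (nsq_nonneg _ _ _))
    (fun x => nsq_nonneg _ _ _) fun x => ?_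
  have e : pd i (nsq f g) x = _ := pd_sq_add_sq i hf.differentiable hg.differentiable x
  rw [sq_abs, e, nsq, nsq]
  nlinarith [sq_nonneg (f x * pd i g x - g x * pd i f x)]

theorem ladyzhenskaya {f g : ℝ × ℝ → ℝ} (hf : TestFn f) (hg : TestFn g) :
    ∫ x, nsq f g x ^ 2 ≤ 2 * (∫ x, nsq f g x) *
      ∫ x, (nsq (pd 0 f) (pd 0 g) x + nsq (pd 1 f) (pd 1 g) x) := by
  have h := integral_sq_le_pd_mul_pd (hf.nsq hg)
  have h0 := integral_abs_pd_nsq_sq_le 0 hf hg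
  have h1 := integral_abs_pd_nsq_sq_le 1 hf hg
  rw [integral_add ((hf.pd 0).nsq (hg.pd 0)).integrable ((hf.pd 1).nsq (hg.pd 1)).integrable]
  have hA : 0 ≤ ∫ x, nsq f g x := integral_nonneg (nsq_nonneg _ _)
  have hX : 0 ≤ ∫ x, nsq (pd 0 f) (pd 0 g) x := integral_nonneg (nsq_nonneg _ _)
  have hY : 0 ≤ ∫ x, nsq (pd 1 f) (pd 1 g) x := integral_nonneg (nsq_nonneg _ _)
  generalize (∫ x, nsq f g x) = A at *
  generalize (∫ x, nsq (pd 0 f) (pd 0 g) x) = X at *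
  generalize (∫ x, nsq (pd 1 f) (pd 1 g) x) = Y at *
  refine h.trans (le_of_pow_le_pow_left₀ two_ne_zero (by positivity) ?_)
  calc _ = (∫ x, |pd 0 (nsq f g) x|) ^ 2 * (∫ x, |pd 1 (nsq f g) x|) ^ 2 := by ring
    _ ≤ (4 * A * X) * (4 * A * Y) := mul_le_mul h0 h1 (sq_nonneg _) (by positivity)
    _ ≤ (2 * A * (X + Y)) ^ 2 := by nlinarith [sq_nonneg (A * (X - Y))]

/-! ### The trilinear form -/

/-- `B̂(w, w) · v` at a point. -/
def tri (w v : Vec) (x : ℝ × ℝ) : ℝ := ∑ j, Bhat2 w w j x * v j x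

/-- The flux whose divergence is `(B̂(u) - B̂(v)) · w + B̂(w, w) · v`, where `w = u - v`. -/
def flux (u v w : Vec) (i : Fin 2) (y : ℝ × ℝ) : ℝ :=
  1 / 2 * (u i y * (w 0 y * w 0 y + w 1 y * w 1 y)) + w i y * (v 0 y * w 0 y + v 1 y * w 1 y)

theorem pairing_identity {u v : Vec} (hu : ∀ i, TestFn (u i)) (hv : ∀ i, TestFn (v i))
    (x : ℝ × ℝ) :
    ∑ j, Bhat u j x * (u - v) j x - ∑ j, Bhat v j x * (u - v) j x
      = (pd 0 (flux u v (u - v) 0) x + pd 1 (flux u v (u - v) 1) x) - tri (u - v) v x := by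
  have du i := (hu i).differentiable
  have dv i := (hv i).differentiable
  have dw i : Differentiable ℝ ((u - v) i) := (du i).sub (dv i)
  have hw : ∀ i j, pd i (u j - v j) x = pd i (u j) x - pd i (v j) x :=
    fun i j => pd_sub i (du j) (dv j) x
  have hF : ∀ i, pd i (flux u v (u - v) i) x = _ := fun i =>
    pd_flux i (du i) (dw i) (dw 0) (dw 1) (dv 0) (dv 1) x
  rw [hF, hF]
  simp only [tri, Bhat, Bhat2, conv, divg, Fin.sum_univ_two, hw, Pi.sub_apply]
  ring

theorem trilinear_sq_le (w v : Vec) (x : ℝ × ℝ) :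
    tri w v x ^ 2 ≤ (nsq (pd 0 (w 0)) (pd 0 (w 1)) x + nsq (pd 1 (w 0)) (pd 1 (w 1)) x) *
      (5 / 2 * (nsq (w 0) (w 1) x * nsq (v 0) (v 1) x)) := by
  simp only [tri, Bhat2, conv, divg, Fin.sum_univ_two, nsq]
  generalize pd 0 (w 0) x = a
  generalize pd 0 (w 1) x = b
  generalize pd 1 (w 0) x = c
  generalize pd 1 (w 1) x = d
  generalize w 0 x = p
  generalize w 1 x = q
  generalize v 0 x = r
  generalize v 1 x = s
  -- Entries of the matrix `w ⊗ v + ½ (w · v) I` that is contracted with `∇w`.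
  obtain ⟨A, hA⟩ : ∃ A, A = p * r + 1 / 2 * (p * r + q * s) := ⟨_, rfl⟩
  obtain ⟨B, hB⟩ : ∃ B, B = p * s := ⟨_, rfl⟩
  obtain ⟨C, hC⟩ : ∃ C, C = q * r := ⟨_, rfl⟩
  obtain ⟨D, hD⟩ : ∃ D, D = q * s + 1 / 2 * (p * r + q * s) := ⟨_, rfl⟩
  have h1 : (a * A + b * B + c * C + d * D) ^ 2
      ≤ (a * a + b * b + (c * c + d * d)) * (A ^ 2 + B ^ 2 + C ^ 2 + D ^ 2) := by
    nlinarith [sq_nonneg (a * B - b * A), sq_nonneg (a * C - c * A), sq_nonneg (a * D - d * A),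
      sq_nonneg (b * C - c * B), sq_nonneg (b * D - d * B), sq_nonneg (c * D - d * C)]
  have h2 : A ^ 2 + B ^ 2 + C ^ 2 + D ^ 2 ≤ 5 / 2 * ((p * p + q * q) * (r * r + s * s)) := by
    subst hA hB hC hD
    nlinarith [sq_nonneg (p * s - q * r)]
  refine le_trans (le_of_eq ?_) (h1.trans (mul_le_mul_of_nonneg_left h2 ?_))
  rotate_left
  · nlinarith [mul_self_nonneg a, mul_self_nonneg b, mul_self_nonneg c, mul_self_nonneg d]
  subst hA hB hC hD
  ring

theorem cc_tri {w v : Vec} (hw : ∀ i, TestFn (w i)) (hv : ∀ i, TestFn (v i)) : CC (tri w v) := by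
  have e : tri w v = fun x =>
      ((w 0 x * pd 0 (w 0) x + w 1 x * pd 1 (w 0) x)
        + 1 / 2 * ((pd 0 (w 0) x + pd 1 (w 1) x) * w 0 x)) * v 0 x
      + ((w 0 x * pd 0 (w 1) x + w 1 x * pd 1 (w 1) x)
        + 1 / 2 * ((pd 0 (w 0) x + pd 1 (w 1) x) * w 1 x)) * v 1 x := by
    funext x
    simp only [tri, Bhat2, conv, divg, Fin.sum_univ_two]
    ring
  rw [e]
  have c i := (hw i).cc
  have d i j := (hw j).pd i
  have t j : CC fun x => ((w 0 x * pd 0 (w j) x + w 1 x * pd 1 (w j) x)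
        + 1 / 2 * ((pd 0 (w 0) x + pd 1 (w 1) x) * w j x)) * v j x :=
    ((((c 0).mul (d 0 j)).add ((c 1).mul (d 1 j))).add
      ((((d 0 0).add (d 1 1)).mul (c j)).const_mul _)).mul (hv j).cc
  exact (t 0).add (t 1)

theorem integral_tri_pow_four_le {w v : Vec} (hw : ∀ i, TestFn (w i)) (hv : ∀ i, TestFn (v i)) :
    (∫ x, tri w v x) ^ 4 ≤ 25 / 2 *
      (∫ x, (nsq (pd 0 (w 0)) (pd 0 (w 1)) x + nsq (pd 1 (w 0)) (pd 1 (w 1)) x)) ^ 3 *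
      ((∫ x, nsq (w 0) (w 1) x) * ∫ x, nsq (v 0) (v 1) x ^ 2) := by
  have cw := ((hw 0).nsq (hw 1)).cc
  have cv := ((hv 0).nsq (hv 1)).cc
  have h1 := integral_sq_le (cc_tri hw hv)
    ((((hw 0).pd 0).nsq ((hw 1).pd 0)).add (((hw 0).pd 1).nsq ((hw 1).pd 1)))
    ((cw.mul cv).const_mul (5 / 2))
    (fun x => add_nonneg (nsq_nonneg _ _ _) (nsq_nonneg _ _ _))
    (fun x => mul_nonneg (by norm_num) (mul_nonneg (nsq_nonneg _ _ _) (nsq_nonneg _ _ _)))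
    (trilinear_sq_le w v)
  have h2 := integral_sq_le (cw.mul cv) cw.sq cv.sq (fun x => sq_nonneg _) (fun x => sq_nonneg _)
    (fun x => (mul_pow _ _ 2).le)
  have h3 := ladyzhenskaya (hw 0) (hw 1)
  rw [integral_const_mul] at h1
  have hH : 0 ≤ ∫ x, (nsq (pd 0 (w 0)) (pd 0 (w 1)) x + nsq (pd 1 (w 0)) (pd 1 (w 1)) x) :=
    integral_nonneg fun x => add_nonneg (nsq_nonneg _ _ _) (nsq_nonneg _ _ _)
  have hV : 0 ≤ ∫ x, nsq (v 0) (v 1) x ^ 2 := integral_nonneg fun x => sq_nonneg _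
  generalize (∫ x, (nsq (pd 0 (w 0)) (pd 0 (w 1)) x + nsq (pd 1 (w 0)) (pd 1 (w 1)) x)) = H at *
  generalize (∫ x, nsq (v 0) (v 1) x ^ 2) = V at *
  generalize (∫ x, nsq (w 0) (w 1) x) = L at *
  generalize (∫ x, nsq (w 0) (w 1) x ^ 2) = Q at *
  generalize (∫ x, nsq (w 0) (w 1) x * nsq (v 0) (v 1) x) = M at *
  generalize (∫ x, tri w v x) = T at *
  calc T ^ 4 = (T ^ 2) ^ 2 := by ring
    _ ≤ (H * (5 / 2 * M)) ^ 2 := pow_le_pow_left₀ (sq_nonneg _) h1 2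
    _ = 25 / 4 * H ^ 2 * M ^ 2 := by ring
    _ ≤ 25 / 4 * H ^ 2 * (Q * V) := mul_le_mul_of_nonneg_left h2 (by positivity)
    _ ≤ 25 / 4 * H ^ 2 * (2 * L * H * V) :=
      mul_le_mul_of_nonneg_left (mul_le_mul_of_nonneg_right h3 hV) (by positivity)
    _ = _ := by ring

/-- Young's inequality with exponents `4/3` and `4`, in the form needed for the final step. -/
theorem young_fourth {ν a b T : ℝ} (hν : 0 < ν) (ha : 0 ≤ a) (hb : 0 ≤ b)
    (h : T ^ 4 ≤ 25 / 2 * a ^ 3 * b) : |T| ≤ ν / 2 * a + 27 / (2 * ν ^ 3) * b := by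
  -- In the variables `p = ν a / 6`, `q = 27 b / (2 ν³)` it suffices that `200 p³ q ≤ (3 p + q)⁴`.
  obtain ⟨p, hp⟩ : ∃ p, p = ν * a / 6 := ⟨_, rfl⟩
  obtain ⟨q, hq⟩ : ∃ q, q = 27 / (2 * ν ^ 3) * b := ⟨_, rfl⟩
  have hp0 : 0 ≤ p := by rw [hp]; positivity
  have hq0 : 0 ≤ q := by rw [hq]; positivity
  have e : 25 / 2 * a ^ 3 * b = 200 * (p ^ 3 * q) := by
    rw [hp, hq]; field_simp; ring
  have e' : ν / 2 * a + 27 / (2 * ν ^ 3) * b = 3 * p + q := by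
    rw [hp, hq]; ring
  rw [e']
  rw [e] at h
  refine le_of_pow_le_pow_left₀ four_ne_zero (by positivity) ?_
  rw [Even.pow_abs (by decide)]
  have h2 : 0 ≤ p ^ 2 * (81 * p ^ 2 - 92 * (p * q) + 54 * q ^ 2) :=
    mul_nonneg (sq_nonneg _) (by nlinarith [sq_nonneg (p - q), sq_nonneg (46 * q - 81 * p)])
  have h3 : 0 ≤ 12 * (p * q ^ 3) + q ^ 4 := by positivity
  nlinarith

/-! ### From the domain to the plane -/

theorem H10.testFn {O : Set (ℝ × ℝ)} {u : Vec} (hu : H10 O u) (i : Fin 2) : TestFn (u i) :=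
  ⟨(hu i).1, (hu i).2.1⟩

theorem H10.eq_zero {O : Set (ℝ × ℝ)} {u : Vec} (hu : H10 O u) (i : Fin 2) {x : ℝ × ℝ}
    (hx : x ∉ O) : u i x = 0 :=
  image_eq_zero_of_notMem_tsupport fun h => hx ((hu i).2.2 h)

theorem H10.pd_eq_zero {O : Set (ℝ × ℝ)} {u : Vec} (hu : H10 O u) (i j : Fin 2) {x : ℝ × ℝ}
    (hx : x ∉ O) : pd i (u j) x = 0 :=
  _root_.pd_eq_zero i fun h => hx ((hu j).2.2 h)

theorem H10.sub {O : Set (ℝ × ℝ)} {u v : Vec} (hu : H10 O u) (hv : H10 O v) : H10 O (u - v) :=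
  fun i => ⟨(hu i).1.sub (hv i).1, (hu i).2.1.sub (hv i).2.1,
    (tsupport_sub _ _).trans (Set.union_subset (hu i).2.2 (hv i).2.2)⟩

theorem l2_sq {O : Set (ℝ × ℝ)} {w : Vec} (hw : H10 O w) :
    l2 O w ^ 2 = ∫ x, nsq (w 0) (w 1) x := by
  rw [l2, Real.sq_sqrt (integral_nonneg fun x => Finset.sum_nonneg fun j _ => sq_nonneg _),
    setIntegral_eq_integral_of_forall_compl_eq_zero fun x hx => by simp [hw.eq_zero _ hx]]
  simp only [Fin.sum_univ_two, nsq, pow_two]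

theorem h1_sq {O : Set (ℝ × ℝ)} {w : Vec} (hw : H10 O w) :
    h1 O w ^ 2 =
      ∫ x, (nsq (pd 0 (w 0)) (pd 0 (w 1)) x + nsq (pd 1 (w 0)) (pd 1 (w 1)) x) := by
  rw [h1, Real.sq_sqrt (integral_nonneg fun x => Finset.sum_nonneg fun i _ =>
      Finset.sum_nonneg fun j _ => sq_nonneg _),
    setIntegral_eq_integral_of_forall_compl_eq_zero fun x hx => by simp [hw.pd_eq_zero _ _ hx]]
  simp only [Fin.sum_univ_two, nsq, pow_two]

theorem l4_pow_four {O : Set (ℝ × ℝ)} {v : Vec} (hv : H10 O v) :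
    l4 O v ^ 4 = ∫ x, nsq (v 0) (v 1) x ^ 2 := by
  have h0 : 0 ≤ ∫ x in O, (∑ j, (v j x) ^ 2) ^ 2 := integral_nonneg fun x => sq_nonneg _
  rw [l4, ← Real.rpow_natCast, ← Real.rpow_mul h0,
    setIntegral_eq_integral_of_forall_compl_eq_zero fun x hx => by simp [hv.eq_zero _ hx]]
  norm_num
  simp only [nsq, pow_two]

theorem TestFn.flux {u v w : Vec} (hu : ∀ i, TestFn (u i)) (hv : ∀ i, TestFn (v i))
    (hw : ∀ i, TestFn (w i)) (i : Fin 2) : TestFn (flux u v w i) :=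
  (((hu i).mul (((hw 0).mul (hw 0)).add ((hw 1).mul (hw 1)))).const_mul _).add
    ((hw i).mul (((hv 0).mul (hw 0)).add ((hv 1).mul (hw 1))))

theorem vInner_Bhat_sub {O : Set (ℝ × ℝ)} {u v : Vec} (hu : H10 O u) (hv : H10 O v) :
    vInner O (Bhat u) (u - v) - vInner O (Bhat v) (u - v) = -∫ x, tri (u - v) v x := by
  have hw := hu.sub hv
  have c {a : Vec} (ha : H10 O a) : CC fun x => ∑ j, Bhat a j x * (u - v) j x :=
    cc_tri ha.testFn hw.testFn
  have hF := TestFn.flux hu.testFn hv.testFn hw.testFn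
  rw [vInner, vInner,
    setIntegral_eq_integral_of_forall_compl_eq_zero fun x hx => by simp [hw.eq_zero _ hx],
    setIntegral_eq_integral_of_forall_compl_eq_zero fun x hx => by simp [hw.eq_zero _ hx],
    ← integral_sub (c hu).integrable (c hv).integrable]
  simp only [pairing_identity hu.testFn hv.testFn]
  rw [integral_sub (((hF 0).pd 0).add ((hF 1).pd 1)).integrable
      (cc_tri hw.testFn hv.testFn).integrable,
    integral_add ((hF 0).pd 0).integrable ((hF 1).pd 1).integrable,
    integral_pd_eq_zero 0 (hF 0), integral_pd_eq_zero 1 (hF 1)]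
  ring

theorem Bhat_difference_young_estimate
    (O : Set (ℝ × ℝ)) (hO : IsOpen O) (hObdd : Bornology.IsBounded O)
    (ν : ℝ) (hν : 0 < ν)
    (u v : Vec) (hu : H10 O u) (hv : H10 O v) :
    |vInner O (Bhat u) (u - v) - vInner O (Bhat v) (u - v)| ≤
      ν / 2 * (h1 O (u - v)) ^ 2 + 27 / (2 * ν ^ 3) * (l2 O (u - v)) ^ 2 * (l4 O v) ^ 4 := by
  rw [vInner_Bhat_sub hu hv, abs_neg, mul_assoc, h1_sq (hu.sub hv), l2_sq (hu.sub hv),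
    l4_pow_four hv]
  refine young_fourth hν ?_ ?_ (integral_tri_pow_four_le (hu.sub hv).testFn hv.testFn)
  · exact integral_nonneg fun x => add_nonneg (nsq_nonneg _ _ _) (nsq_nonneg _ _ _)
  · exact mul_nonneg (integral_nonneg fun x => nsq_nonneg _ _ _)
      (integral_nonneg fun x => sq_nonneg _)

end
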